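/- For every z > 2, the quantity R₃ = Σᵢ₌₁ⁿ E[ξᵢ 1{ξᵢ > 1}] · E[f_z(W̄⁽ⁱ⁾)] satisfies |R₃| ≤ (1/2)(e^{−1/2} + e^{e − 2}) · e^{−z/2} · (β₂ + β₃). -/

import Mathlib

open MeasureTheory ProbabilityTheory Real

/-- The standard normal cumulative distribution function. -/
noncomputable def Phi (z : ℝ) : ℝ :=
  (Real.sqrt (2 * Real.pi))⁻¹ * ∫ u in Set.Iic z, Real.exp (-u ^ 2 / 2)

/-- The bounded solution `f_z` of the Stein equation
`f'(w) - w f(w) = 1{w ≤ z} - Φ(z)`. -/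
noncomputable def fz (z w : ℝ) : ℝ :=
  if w ≤ z then Real.sqrt (2 * Real.pi) * Real.exp (w ^ 2 / 2) * Phi w * (1 - Phi z)
  else Real.sqrt (2 * Real.pi) * Real.exp (w ^ 2 / 2) * Phi z * (1 - Phi w)

/-- The derivative `f_z'`, expressed via the Stein equation. -/
noncomputable def fz' (z w : ℝ) : ℝ :=
  w * fz z w + (if w ≤ z then 1 else 0) - Phi z

/-- The truncation `x̄ᵢ = ξᵢ 1{ξᵢ ≤ 1}`. -/
noncomputable def xbar {Ω : Type*} {n : ℕ} (ξ : Fin n → Ω → ℝ) (i : Fin n) (ω : Ω) : ℝ :=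
  if ξ i ω ≤ 1 then ξ i ω else 0

/-- `W̄ = ∑ᵢ x̄ᵢ`. -/
noncomputable def Wbar {Ω : Type*} {n : ℕ} (ξ : Fin n → Ω → ℝ) (ω : Ω) : ℝ :=
  ∑ i, xbar ξ i ω

/-- `W̄⁽ⁱ⁾ = W̄ - x̄ᵢ`. -/
noncomputable def Wbari {Ω : Type*} {n : ℕ} (ξ : Fin n → Ω → ℝ) (i : Fin n) (ω : Ω) : ℝ :=
  Wbar ξ ω - xbar ξ i ω

/-- `K̄ᵢ(t) = E[x̄ᵢ (1{0 ≤ t ≤ x̄ᵢ} - 1{x̄ᵢ ≤ t < 0})]`. -/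
noncomputable def Kbar {Ω : Type*} [MeasureSpace Ω] {n : ℕ} (ξ : Fin n → Ω → ℝ)
    (i : Fin n) (t : ℝ) : ℝ :=
  ∫ ω, xbar ξ i ω * ((if 0 ≤ t ∧ t ≤ xbar ξ i ω then (1 : ℝ) else 0)
    - (if xbar ξ i ω ≤ t ∧ t < 0 then (1 : ℝ) else 0))

/-- `β₂ = ∑ᵢ E[ξᵢ² 1{|ξᵢ| > 1}]`. -/
noncomputable def beta2 {Ω : Type*} [MeasureSpace Ω] {n : ℕ} (ξ : Fin n → Ω → ℝ) : ℝ :=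
  ∑ i, ∫ ω, (if 1 < |ξ i ω| then (ξ i ω) ^ 2 else 0)

/-- `β₃ = ∑ᵢ E[|ξᵢ|³ 1{|ξᵢ| ≤ 1}]`. -/
noncomputable def beta3 {Ω : Type*} [MeasureSpace Ω] {n : ℕ} (ξ : Fin n → Ω → ℝ) : ℝ :=
  ∑ i, ∫ ω, (if |ξ i ω| ≤ 1 then |ξ i ω| ^ 3 else 0)

/-! For `z ≥ 2`, Mills' bound on the normal tail gives `f_z(w) ≤ z⁻¹ (e^{-1/2} + e^w) e^{-z/2}`
for every `w`, so it remains to control `E exp(W̄⁽ⁱ⁾)`. The summands of `W̄⁽ⁱ⁾` are independent,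
bounded above by `1`, and of nonpositive mean because truncating from above only lowers them; hence
Bennett's bound on the moment generating function gives `E exp(W̄⁽ⁱ⁾) ≤ exp((e - 2) ∑ⱼ E ξⱼ²)`.
Finally `x 1{x > 1} ≤ x² 1{|x| > 1}`, so the weights `E[ξᵢ 1{ξᵢ > 1}]` sum to at most `β₂`. -/

section Exponential

-- Taylor's formula with integral remainder: the integral is `(exp x - 1 - x) / x ^ 2`, in a form
-- that is visibly monotone in `x`.
lemma sq_mul_integral_one_sub_mul_exp (x : ℝ) :
    x ^ 2 * ∫ s in (0 : ℝ)..1, (1 - s) * exp (s * x) = exp x - 1 - x := by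
  have hderiv (s : ℝ) : HasDerivAt (fun s ↦ exp (s * x) * ((1 - s) * x + 1))
      (x ^ 2 * ((1 - s) * exp (s * x))) s := by
    have hexp : HasDerivAt (fun s ↦ exp (s * x)) (exp (s * x) * x) s := by
      simpa using ((hasDerivAt_id s).mul_const x).exp
    have hlin : HasDerivAt (fun s ↦ (1 - s) * x + 1) (-x) s := by
      simpa using (((hasDerivAt_id s).const_sub 1).mul_const x).add_const 1
    convert! hexp.mul hlin using 1
    ring
  rw [← intervalIntegral.integral_const_mul,
    intervalIntegral.integral_eq_sub_of_hasDerivAt (fun s _ ↦ hderiv s)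
      (Continuous.intervalIntegrable (by fun_prop) _ _)]
  simp only [one_mul, sub_self, zero_mul, zero_add, mul_one, exp_zero, sub_zero]
  ring

lemma monotone_integral_one_sub_mul_exp :
    Monotone fun x : ℝ ↦ ∫ s in (0 : ℝ)..1, (1 - s) * exp (s * x) := by
  intro x y hxy
  refine intervalIntegral.integral_mono_on zero_le_one
    (Continuous.intervalIntegrable (by fun_prop) _ _)
    (Continuous.intervalIntegrable (by fun_prop) _ _) fun s hs ↦ ?_
  have hs' : 0 ≤ 1 - s := sub_nonneg.2 hs.2
  have hs0 : 0 ≤ s := hs.1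
  gcongr

lemma exp_mul_le_one_add_mul_add_mul_sq {c t y : ℝ} (hc : 0 < c) (ht : 0 ≤ t) (hy : y ≤ c) :
    exp (t * y) ≤ 1 + t * y + (exp (t * c) - 1 - t * c) / c ^ 2 * y ^ 2 := by
  have hmono := monotone_integral_one_sub_mul_exp (mul_le_mul_of_nonneg_left hy ht)
  have hremainder : exp (t * y) - 1 - t * y ≤ (exp (t * c) - 1 - t * c) / c ^ 2 * y ^ 2 :=
    calc exp (t * y) - 1 - t * y
        = (t * y) ^ 2 * ∫ s in (0 : ℝ)..1, (1 - s) * exp (s * (t * y)) :=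
          (sq_mul_integral_one_sub_mul_exp _).symm
      _ ≤ (t * y) ^ 2 * ∫ s in (0 : ℝ)..1, (1 - s) * exp (s * (t * c)) := by gcongr
      _ = (exp (t * c) - 1 - t * c) / c ^ 2 * y ^ 2 := by
          rw [← sq_mul_integral_one_sub_mul_exp (t * c), mul_pow, mul_pow,
            mul_right_comm (t ^ 2) (c ^ 2), mul_div_cancel_right₀ _ (pow_ne_zero 2 hc.ne')]
          ring
  linarith

end Exponential

section Bennett

variable {Ω ι : Type*} {mΩ : MeasurableSpace Ω} {μ : Measure Ω} {c t : ℝ}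

lemma mgf_le_exp_of_le_of_integral_nonpos [IsProbabilityMeasure μ] {Y : Ω → ℝ} (hc : 0 < c)
    (ht : 0 ≤ t) (hL2 : MemLp Y 2 μ) (hle : ∀ᵐ ω ∂μ, Y ω ≤ c) (hmean : μ[Y] ≤ 0) :
    mgf Y μ t ≤ exp ((exp (t * c) - 1 - t * c) / c ^ 2 * ∫ ω, Y ω ^ 2 ∂μ) := by
  set B := (exp (t * c) - 1 - t * c) / c ^ 2
  have hY : Integrable Y μ := hL2.integrable (by norm_num)
  have hY2 : Integrable (fun ω ↦ Y ω ^ 2) μ := hL2.integrable_sq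
  have hlin : Integrable (fun ω ↦ 1 + t * Y ω) μ := (integrable_const 1).add (hY.const_mul t)
  calc mgf Y μ t
      ≤ ∫ ω, (1 + t * Y ω + B * Y ω ^ 2) ∂μ :=
        integral_mono_ae (integrable_exp_mul_of_le t c ht hY.aemeasurable hle)
          (hlin.add (hY2.const_mul B))
          (hle.mono fun ω hω ↦ exp_mul_le_one_add_mul_add_mul_sq hc ht hω)
    _ = 1 + t * μ[Y] + B * ∫ ω, Y ω ^ 2 ∂μ := by
        rw [integral_add hlin (hY2.const_mul B), integral_add (integrable_const 1) (hY.const_mul t),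
          integral_const_mul, integral_const_mul]
        simp
    _ ≤ B * (∫ ω, Y ω ^ 2 ∂μ) + 1 := by
        linarith [mul_nonpos_of_nonneg_of_nonpos ht hmean]
    _ ≤ exp (B * ∫ ω, Y ω ^ 2 ∂μ) := add_one_le_exp _

lemma mgf_sum_le_exp_of_le_of_integral_nonpos {Y : ι → Ω → ℝ} (hindep : iIndepFun Y μ)
    (hc : 0 < c) (ht : 0 ≤ t) (hL2 : ∀ i, MemLp (Y i) 2 μ) (hle : ∀ i, ∀ᵐ ω ∂μ, Y i ω ≤ c)
    (hmean : ∀ i, μ[Y i] ≤ 0) (s : Finset ι) :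
    mgf (∑ i ∈ s, Y i) μ t ≤
      exp ((exp (t * c) - 1 - t * c) / c ^ 2 * ∑ i ∈ s, ∫ ω, Y i ω ^ 2 ∂μ) := by
  have := hindep.isProbabilityMeasure
  rw [hindep.mgf_sum₀ (fun i ↦ (hL2 i).aestronglyMeasurable.aemeasurable), Finset.mul_sum, exp_sum]
  exact Finset.prod_le_prod (fun i _ ↦ mgf_nonneg)
    fun i _ ↦ mgf_le_exp_of_le_of_integral_nonpos hc ht (hL2 i) (hle i) (hmean i)

end Bennett

section NormalTail

lemma sqrt_two_pi_mul_gaussianReal (s : Set ℝ) :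
    √(2 * π) * (gaussianReal 0 1).real s = ∫ u in s, exp (-u ^ 2 / 2) := by
  rw [measureReal_def, gaussianReal_apply_eq_integral 0 one_ne_zero, ENNReal.toReal_ofReal
    (integral_nonneg fun u ↦ gaussianPDFReal_nonneg 0 1 u), ← integral_const_mul]
  refine integral_congr_ae (.of_forall fun u ↦ ?_)
  have : √(2 * π) ≠ 0 := by positivity
  simp only [gaussianPDFReal, NNReal.coe_one, mul_one, sub_zero, mul_inv_cancel_left₀ this]

lemma Phi_eq_gaussianReal (z : ℝ) : Phi z = (gaussianReal 0 1).real (Set.Iic z) := by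
  rw [Phi, ← sqrt_two_pi_mul_gaussianReal, inv_mul_cancel_left₀ (by positivity)]

lemma one_sub_Phi_eq_gaussianReal (z : ℝ) : 1 - Phi z = (gaussianReal 0 1).real (Set.Ioi z) := by
  rw [Phi_eq_gaussianReal, ← Set.compl_Iic, probReal_compl_eq_one_sub measurableSet_Iic]

lemma Phi_nonneg (z : ℝ) : 0 ≤ Phi z :=
  Phi_eq_gaussianReal z ▸ measureReal_nonneg

lemma one_sub_Phi_nonneg (z : ℝ) : 0 ≤ 1 - Phi z :=
  one_sub_Phi_eq_gaussianReal z ▸ measureReal_nonneg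

lemma Phi_le_one (z : ℝ) : Phi z ≤ 1 :=
  sub_nonneg.1 (one_sub_Phi_nonneg z)

lemma Phi_le_exp_of_nonpos {w : ℝ} (hw : w ≤ 0) : Phi w ≤ exp (-w ^ 2 / 2) := by
  have hchernoff := measure_le_le_exp_mul_mgf (X := id) w hw (integrable_exp_mul_gaussianReal
    (μ := 0) (v := 1) w)
  calc Phi w ≤ exp (-w * w) * mgf id (gaussianReal 0 1) w := Phi_eq_gaussianReal w ▸ hchernoff
    _ = exp (-w ^ 2 / 2) := by
        rw [mgf_id_gaussianReal, ← exp_add]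
        congr 1
        push_cast
        ring

lemma exp_mul_Phi_le (w : ℝ) : exp (w ^ 2 / 2) * Phi w ≤ exp (max w 0 ^ 2 / 2) := by
  rcases le_total w 0 with hw | hw
  · calc exp (w ^ 2 / 2) * Phi w ≤ exp (w ^ 2 / 2) * exp (-w ^ 2 / 2) := by
          gcongr
          exact Phi_le_exp_of_nonpos hw
      _ = exp (max w 0 ^ 2 / 2) := by
          rw [← exp_add, max_eq_right hw]
          ring_nf
  · rw [max_eq_left hw]
    exact mul_le_of_le_one_right (exp_pos _).le (Phi_le_one w)

lemma integrable_exp_neg_sq_div_two : Integrable fun u : ℝ ↦ exp (-u ^ 2 / 2) :=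
  (integrable_exp_neg_mul_sq (b := 1 / 2) (by norm_num)).congr (.of_forall fun u ↦ by ring_nf)

lemma integrable_mul_exp_neg_sq_div_two : Integrable fun u : ℝ ↦ u * exp (-u ^ 2 / 2) :=
  (integrable_mul_exp_neg_mul_sq (b := 1 / 2) (by norm_num)).congr (.of_forall fun u ↦ by ring_nf)

lemma integral_Ioi_mul_exp_neg_sq_div_two (z : ℝ) :
    ∫ u in Set.Ioi z, u * exp (-u ^ 2 / 2) = exp (-z ^ 2 / 2) := by
  have hderiv (x : ℝ) :
      HasDerivAt (fun u : ℝ ↦ -exp (-u ^ 2 / 2)) (x * exp (-x ^ 2 / 2)) x := by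
    convert! (((hasDerivAt_pow 2 x).neg.div_const 2).exp).neg using 1
    simp only [Pi.neg_apply]
    ring
  have hsq : Filter.Tendsto (fun u : ℝ ↦ -u ^ 2 / 2) Filter.atTop Filter.atBot :=
    (Filter.tendsto_neg_atTop_atBot.comp
      (Filter.tendsto_pow_atTop two_ne_zero)).atBot_div_const two_pos
  have hlim : Filter.Tendsto (fun u : ℝ ↦ -exp (-u ^ 2 / 2)) Filter.atTop (nhds 0) := by
    simpa using (tendsto_exp_atBot.comp hsq).neg
  rw [integral_Ioi_of_hasDerivAt_of_tendsto' (fun x _ ↦ hderiv x)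
    integrable_mul_exp_neg_sq_div_two.integrableOn hlim, zero_sub, neg_neg]

-- Mills' bound: on `(z, ∞)` the density is at most `u / z` times itself, which integrates exactly.
lemma sqrt_two_pi_mul_one_sub_Phi_le {z : ℝ} (hz : 0 < z) :
    √(2 * π) * (1 - Phi z) ≤ z⁻¹ * exp (-z ^ 2 / 2) := by
  rw [le_inv_mul_iff₀ hz, one_sub_Phi_eq_gaussianReal, sqrt_two_pi_mul_gaussianReal,
    ← integral_const_mul, ← integral_Ioi_mul_exp_neg_sq_div_two z]
  refine setIntegral_mono_on (integrable_exp_neg_sq_div_two.const_mul z).integrableOn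
    integrable_mul_exp_neg_sq_div_two.integrableOn measurableSet_Ioi fun u hu ↦ ?_
  gcongr
  exact le_of_lt hu

end NormalTail

section SteinSolution

variable {z w : ℝ}

lemma fz_nonneg (z w : ℝ) : 0 ≤ fz z w := by
  have := Phi_nonneg z
  have := Phi_nonneg w
  have := one_sub_Phi_nonneg z
  have := one_sub_Phi_nonneg w
  unfold fz
  split_ifs <;> positivity

lemma fz_le_of_le (hz : 0 < z) (hw : w ≤ z) :
    fz z w ≤ z⁻¹ * exp ((max w 0 ^ 2 - z ^ 2) / 2) := by
  have := one_sub_Phi_nonneg z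
  calc fz z w = exp (w ^ 2 / 2) * Phi w * (√(2 * π) * (1 - Phi z)) := by
        rw [fz, if_pos hw]
        ring
    _ ≤ exp (max w 0 ^ 2 / 2) * (z⁻¹ * exp (-z ^ 2 / 2)) := by
        gcongr ?_ * ?_
        · exact exp_mul_Phi_le w
        · exact sqrt_two_pi_mul_one_sub_Phi_le hz
    _ = z⁻¹ * exp ((max w 0 ^ 2 - z ^ 2) / 2) := by
        rw [mul_left_comm, ← exp_add]
        ring_nf

lemma fz_le_inv_of_lt (hz : 0 < z) (hw : z < w) : fz z w ≤ z⁻¹ := by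
  have hw0 : 0 < w := hz.trans hw
  have := one_sub_Phi_nonneg w
  calc fz z w = exp (w ^ 2 / 2) * (√(2 * π) * (1 - Phi w)) * Phi z := by
        rw [fz, if_neg hw.not_ge]
        ring
    _ ≤ exp (w ^ 2 / 2) * (√(2 * π) * (1 - Phi w)) :=
        mul_le_of_le_one_right (by positivity) (Phi_le_one z)
    _ ≤ exp (w ^ 2 / 2) * (w⁻¹ * exp (-w ^ 2 / 2)) := by
        gcongr _ * ?_
        exact sqrt_two_pi_mul_one_sub_Phi_le hw0
    _ = w⁻¹ := by
        rw [mul_left_comm, ← exp_add, neg_div, add_neg_cancel, exp_zero, mul_one]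
    _ ≤ z⁻¹ := by gcongr

lemma exp_max_sq_sub_sq_le (hz : 2 ≤ z) (hw : w ≤ z) :
    exp ((max w 0 ^ 2 - z ^ 2) / 2) ≤ exp (-(1 / 2) + -z / 2) + exp (w + -z / 2) := by
  have hm0 : 0 ≤ max w 0 := le_max_right w 0
  rcases le_or_gt (max w 0) (z - 1) with hfar | hnear
  · refine le_add_of_le_of_nonneg (exp_le_exp.2 ?_) (exp_pos _).le
    nlinarith
  · have hw1 : z - 1 < w := (lt_max_iff.1 hnear).resolve_right (by linarith)
    rw [max_eq_left (by linarith)]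
    refine le_add_of_nonneg_of_le (exp_pos _).le (exp_le_exp.2 ?_)
    nlinarith

lemma fz_le (hz : 2 ≤ z) (w : ℝ) :
    fz z w ≤ z⁻¹ * (exp (-(1 / 2)) + exp w) * exp (-z / 2) := by
  have hz0 : 0 < z := two_pos.trans_le hz
  suffices fz z w ≤ z⁻¹ * (exp (-(1 / 2) + -z / 2) + exp (w + -z / 2)) by
    rwa [exp_add, exp_add, ← add_mul, ← mul_assoc] at this
  rcases le_or_gt w z with hw | hw
  · refine (fz_le_of_le hz0 hw).trans ?_
    gcongr
    exact exp_max_sq_sub_sq_le hz hw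
  · refine (fz_le_inv_of_lt hz0 hw).trans (le_mul_of_one_le_right (by positivity) ?_)
    exact le_add_of_nonneg_of_le (exp_pos _).le (one_le_exp (by linarith))

lemma integral_fz_le {Ω : Type*} {mΩ : MeasurableSpace Ω} {μ : Measure Ω} [IsProbabilityMeasure μ]
    {X : Ω → ℝ} (hX : Integrable (fun ω ↦ exp (X ω)) μ) (hz : 2 ≤ z) :
    ∫ ω, fz z (X ω) ∂μ ≤ z⁻¹ * (exp (-(1 / 2)) + ∫ ω, exp (X ω) ∂μ) * exp (-z / 2) :=
  calc ∫ ω, fz z (X ω) ∂μ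
      ≤ ∫ ω, z⁻¹ * (exp (-(1 / 2)) + exp (X ω)) * exp (-z / 2) ∂μ :=
        integral_mono_of_nonneg (.of_forall fun ω ↦ fz_nonneg z (X ω))
          ((((integrable_const _).add hX).const_mul _).mul_const _)
          (.of_forall fun ω ↦ fz_le hz (X ω))
    _ = z⁻¹ * (exp (-(1 / 2)) + ∫ ω, exp (X ω) ∂μ) * exp (-z / 2) := by
        rw [integral_mul_const, integral_const_mul, integral_add (integrable_const _) hX,
          integral_const, probReal_univ, one_smul]

end SteinSolution

section Truncation

variable {Ω : Type*} {n : ℕ} {ξ : Fin n → Ω → ℝ}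

lemma xbar_le_one (ξ : Fin n → Ω → ℝ) (i : Fin n) (ω : Ω) : xbar ξ i ω ≤ 1 := by
  unfold xbar
  split_ifs <;> linarith

lemma xbar_le_self (ξ : Fin n → Ω → ℝ) (i : Fin n) (ω : Ω) : xbar ξ i ω ≤ ξ i ω := by
  unfold xbar
  split_ifs <;> linarith

lemma abs_xbar_le_abs (ξ : Fin n → Ω → ℝ) (i : Fin n) (ω : Ω) : |xbar ξ i ω| ≤ |ξ i ω| := by
  unfold xbar
  split_ifs <;> simp

lemma Wbari_eq_sum_erase (ξ : Fin n → Ω → ℝ) (i : Fin n) :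
    Wbari ξ i = ∑ j ∈ Finset.univ.erase i, xbar ξ j := by
  ext ω
  rw [Wbari, Wbar, Finset.sum_apply, Finset.sum_erase_eq_sub (Finset.mem_univ i)]

lemma measurable_ite_le_one : Measurable fun x : ℝ ↦ if x ≤ 1 then x else 0 :=
  measurable_id.ite measurableSet_Iic measurable_const

variable [MeasureSpace Ω]

lemma iIndepFun_xbar (hindep : iIndepFun ξ ℙ) : iIndepFun (xbar ξ) ℙ :=
  hindep.comp (fun _ x ↦ if x ≤ 1 then x else 0) fun _ ↦ measurable_ite_le_one

lemma aemeasurable_xbar {i : Fin n} (hξ : AEMeasurable (ξ i) ℙ) : AEMeasurable (xbar ξ i) ℙ :=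
  measurable_ite_le_one.comp_aemeasurable hξ

lemma memLp_xbar {p : ENNReal} {i : Fin n} (hξ : MemLp (ξ i) p ℙ) : MemLp (xbar ξ i) p ℙ :=
  hξ.mono (aemeasurable_xbar hξ.aemeasurable).aestronglyMeasurable
    (.of_forall (abs_xbar_le_abs ξ i))

lemma integrable_exp_Wbari [IsFiniteMeasure (ℙ : Measure Ω)] (hξ : ∀ i, AEMeasurable (ξ i) ℙ)
    (i : Fin n) : Integrable fun ω ↦ exp (Wbari ξ i ω) := by
  have hmeas : AEMeasurable (Wbari ξ i) ℙ := by
    rw [Wbari_eq_sum_erase]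
    exact Finset.aemeasurable_sum _ fun j _ ↦ aemeasurable_xbar (hξ j)
  have hbound (ω : Ω) : Wbari ξ i ω ≤ (Finset.univ.erase i).card • (1 : ℝ) := by
    rw [Wbari_eq_sum_erase, Finset.sum_apply]
    exact Finset.sum_le_card_nsmul _ _ _ fun j _ ↦ xbar_le_one ξ j ω
  simpa only [one_mul] using
    integrable_exp_mul_of_le 1 _ zero_le_one hmeas (.of_forall hbound)

lemma integral_exp_Wbari_le (hindep : iIndepFun ξ ℙ) (hL2 : ∀ i, MemLp (ξ i) 2 ℙ)
    (hmean : ∀ i, ∫ ω, ξ i ω ≤ 0) (i : Fin n) :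
    ∫ ω, exp (Wbari ξ i ω) ≤ exp ((exp 1 - 2) * ∑ j, ∫ ω, ξ j ω ^ 2) := by
  have := hindep.isProbabilityMeasure
  have he : 0 ≤ exp 1 - 2 := by linarith [exp_one_gt_d9]
  have hmean_xbar (j : Fin n) : ∫ ω, xbar ξ j ω ≤ 0 :=
    (integral_mono ((memLp_xbar (hL2 j)).integrable one_le_two)
      ((hL2 j).integrable one_le_two) (xbar_le_self ξ j)).trans (hmean j)
  have hsq_xbar (j : Fin n) : ∫ ω, xbar ξ j ω ^ 2 ≤ ∫ ω, ξ j ω ^ 2 :=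
    integral_mono (memLp_xbar (hL2 j)).integrable_sq (hL2 j).integrable_sq
      fun ω ↦ sq_le_sq.2 (abs_xbar_le_abs ξ j ω)
  calc ∫ ω, exp (Wbari ξ i ω) = mgf (∑ j ∈ Finset.univ.erase i, xbar ξ j) ℙ 1 := by
        simp only [mgf, one_mul, Wbari_eq_sum_erase]
    _ ≤ exp ((exp (1 * 1) - 1 - 1 * 1) / 1 ^ 2 *
          ∑ j ∈ Finset.univ.erase i, ∫ ω, xbar ξ j ω ^ 2) :=
        mgf_sum_le_exp_of_le_of_integral_nonpos (iIndepFun_xbar hindep) one_pos zero_le_one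
          (fun j ↦ memLp_xbar (hL2 j)) (fun j ↦ .of_forall (xbar_le_one ξ j)) hmean_xbar _
    _ = exp ((exp 1 - 2) * ∑ j ∈ Finset.univ.erase i, ∫ ω, xbar ξ j ω ^ 2) := by ring_nf
    _ ≤ exp ((exp 1 - 2) * ∑ j ∈ Finset.univ.erase i, ∫ ω, ξ j ω ^ 2) := by
        gcongr exp (_ * ∑ j ∈ _, ?_) with j
        exact hsq_xbar j
    _ ≤ exp ((exp 1 - 2) * ∑ j, ∫ ω, ξ j ω ^ 2) := by
        gcongr exp (_ * ?_)
        exact Finset.sum_le_sum_of_subset_of_nonneg (Finset.erase_subset i _)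
          fun j _ _ ↦ integral_nonneg fun ω ↦ sq_nonneg _

end Truncation

section Remainder

lemma ite_one_lt_nonneg (x : ℝ) : 0 ≤ if 1 < x then x else 0 := by
  split_ifs <;> linarith

lemma ite_one_lt_le_ite_one_lt_abs_sq (x : ℝ) :
    (if 1 < x then x else 0) ≤ if 1 < |x| then x ^ 2 else 0 := by
  by_cases hx : 1 < x
  · rw [if_pos hx, if_pos (hx.trans_le (le_abs_self x))]
    nlinarith
  · rw [if_neg hx]
    positivity

lemma integral_ite_one_lt_le {Ω : Type*} {mΩ : MeasurableSpace Ω} {μ : Measure Ω} {X : Ω → ℝ}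
    (hX : MemLp X 2 μ) :
    ∫ ω, (if 1 < X ω then X ω else 0) ∂μ ≤ ∫ ω, (if 1 < |X ω| then X ω ^ 2 else 0) ∂μ := by
  have hmeas : Measurable fun x : ℝ ↦ if 1 < |x| then x ^ 2 else 0 :=
    (measurable_id.pow_const 2).ite (measurableSet_lt measurable_const measurable_abs)
      measurable_const
  have hint : Integrable (fun ω ↦ if 1 < |X ω| then X ω ^ 2 else 0) μ :=
    hX.integrable_sq.mono (hmeas.comp_aemeasurable hX.aemeasurable).aestronglyMeasurable
      (.of_forall fun ω ↦ by split_ifs <;> simp [sq_nonneg])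
  exact integral_mono_of_nonneg (.of_forall fun ω ↦ ite_one_lt_nonneg (X ω)) hint
    (.of_forall fun ω ↦ ite_one_lt_le_ite_one_lt_abs_sq (X ω))

variable {Ω : Type*} [MeasureSpace Ω] {n : ℕ}

lemma beta2_nonneg (ξ : Fin n → Ω → ℝ) : 0 ≤ beta2 ξ :=
  Finset.sum_nonneg fun i _ ↦ integral_nonneg fun ω ↦ by
    dsimp only [Pi.zero_apply]
    positivity

lemma beta3_nonneg (ξ : Fin n → Ω → ℝ) : 0 ≤ beta3 ξ :=
  Finset.sum_nonneg fun i _ ↦ integral_nonneg fun ω ↦ by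
    dsimp only [Pi.zero_apply]
    positivity

theorem R3_bound_general {ξ : Fin n → Ω → ℝ} (hindep : iIndepFun ξ ℙ)
    (hL2 : ∀ i, MemLp (ξ i) 2 ℙ) (hmean : ∀ i, ∫ ω, ξ i ω ≤ 0) {z : ℝ} (hz : 2 ≤ z) :
    |∑ i, (∫ ω, (if 1 < ξ i ω then ξ i ω else 0)) * (∫ ω, fz z (Wbari ξ i ω))|
      ≤ z⁻¹ * (exp (-(1 / 2)) + exp ((exp 1 - 2) * ∑ i, ∫ ω, ξ i ω ^ 2)) * exp (-z / 2)
          * beta2 ξ := by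
  have := hindep.isProbabilityMeasure
  set C := z⁻¹ * (exp (-(1 / 2)) + exp ((exp 1 - 2) * ∑ i, ∫ ω, ξ i ω ^ 2)) * exp (-z / 2)
  have hweight_nonneg (i : Fin n) : 0 ≤ ∫ ω, (if 1 < ξ i ω then ξ i ω else 0) :=
    integral_nonneg fun ω ↦ ite_one_lt_nonneg (ξ i ω)
  have hfz_nonneg (i : Fin n) : 0 ≤ ∫ ω, fz z (Wbari ξ i ω) := integral_nonneg fun ω ↦ fz_nonneg z _
  have hfz_le (i : Fin n) : ∫ ω, fz z (Wbari ξ i ω) ≤ C := by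
    refine (integral_fz_le (integrable_exp_Wbari (fun j ↦ (hL2 j).aemeasurable) i) hz).trans ?_
    dsimp only [C]
    gcongr _ * (_ + ?_) * _
    exact integral_exp_Wbari_le hindep hL2 hmean i
  have hweight_le (i : Fin n) := integral_ite_one_lt_le (hL2 i)
  rw [abs_of_nonneg (Finset.sum_nonneg fun i _ ↦ mul_nonneg (hweight_nonneg i) (hfz_nonneg i)),
    mul_comm C, beta2, Finset.sum_mul]
  exact Finset.sum_le_sum fun i _ ↦ mul_le_mul (hweight_le i) (hfz_le i) (hfz_nonneg i)
    ((hweight_nonneg i).trans (hweight_le i))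

end Remainder

/-- Bound (4.28) on R3. -/
theorem R3_bound
    {Ω : Type*} [MeasureSpace Ω] [IsProbabilityMeasure (ℙ : Measure Ω)]
    {n : ℕ} (ξ : Fin n → Ω → ℝ)
    (hmeas : ∀ i, Measurable (ξ i))
    (hindep : iIndepFun ξ ℙ)
    (hL2 : ∀ i, MemLp (ξ i) 2 ℙ)
    (hmean : ∀ i, ∫ ω, ξ i ω = 0)
    (hvar : ∑ i, ∫ ω, (ξ i ω) ^ 2 = 1)
    (z : ℝ) (hz : 2 < z) :
    |∑ i, (∫ ω, (if 1 < ξ i ω then ξ i ω else 0)) * (∫ ω, fz z (Wbari ξ i ω))|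
      ≤ (1 / 2) * (Real.exp (-(1 / 2) : ℝ) + Real.exp (Real.exp 1 - 2))
          * Real.exp (-z / 2) * (beta2 ξ + beta3 ξ) := by
  have hbound := R3_bound_general hindep hL2 (fun i ↦ (hmean i).le) hz.le
  rw [hvar, mul_one] at hbound
  have hz_inv : z⁻¹ ≤ 1 / 2 := one_div (2 : ℝ) ▸ inv_anti₀ two_pos hz.le
  have hbeta2 := beta2_nonneg ξ
  exact hbound.trans (by gcongr; exact le_add_of_nonneg_right (beta3_nonneg ξ))
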